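/- If E ≥ |B| then L(e;E) = ∅, while if 0 < E < |B| then L(e;E) = { 2πA/√(B²/E² − 1) }. -/

import Mathlib

open Real

noncomputable section

/-- The simply connected three-dimensional Heisenberg group, modeled as `ℝ³` in
exponential coordinates. -/
abbrev H3 : Type := ℝ × ℝ × ℝ

/-- Heisenberg group multiplication in exponential coordinates. -/
def Hmul (p q : H3) : H3 :=
  (p.1 + q.1, p.2.1 + q.2.1, p.2.2 + q.2.2 + (p.1 * q.2.1 - p.2.1 * q.1) / 2)

open Classical in
/-- The magnetic geodesic through the identity with parameters `(u₀, v₀, z₀)`, for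
metric parameter `A` and magnetic strength `B`. -/
def magGeo (A B u₀ v₀ z₀ : ℝ) : ℝ → H3 := fun t =>
  if z₀ ≠ 0 then
    ((u₀ / z₀) * Real.sin (z₀ * t / A) - (v₀ / z₀) * (1 - Real.cos (z₀ * t / A)),
     (u₀ / z₀) * (1 - Real.cos (z₀ * t / A)) + (v₀ / z₀) * Real.sin (z₀ * t / A),
     (z₀ + B + (u₀ ^ 2 + v₀ ^ 2) / (2 * A * z₀)) * t
       - ((u₀ ^ 2 + v₀ ^ 2) / (2 * z₀ ^ 2)) * Real.sin (z₀ * t / A))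
  else (u₀ * t / A, v₀ * t / A, B * t)

/-- `L(e;E)`: the set of `E·ω` over minimal positive periods `ω` of nonconstant
periodic magnetic geodesics of energy `E`. -/
def LsetId (A B E : ℝ) : Set ℝ :=
  {l | ∃ (a : H3) (u₀ v₀ z₀ ω : ℝ),
    E ^ 2 = (u₀ ^ 2 + v₀ ^ 2) / A + (z₀ + B) ^ 2 ∧
    (∃ t s, Hmul a (magGeo A B u₀ v₀ z₀ t) ≠ Hmul a (magGeo A B u₀ v₀ z₀ s)) ∧
    IsLeast {ω' : ℝ | 0 < ω' ∧
      ∀ t, Hmul a (magGeo A B u₀ v₀ z₀ (t + ω')) = Hmul a (magGeo A B u₀ v₀ z₀ t)} ω ∧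
    l = E * ω}

theorem Hmul_left_cancel' (a p q : H3) : Hmul a p = Hmul a q ↔ p = q := by
  obtain ⟨a1, a2, a3⟩ := a
  obtain ⟨p1, p2, p3⟩ := p
  obtain ⟨q1, q2, q3⟩ := q
  simp only [Hmul, Prod.mk.injEq]
  constructor
  · rintro ⟨h1, h2, h3⟩
    have h1 : p1 = q1 := by linarith
    have h2 : p2 = q2 := by linarith
    subst h1 h2
    exact ⟨rfl, rfl, by linarith⟩
  · rintro ⟨rfl, rfl, rfl⟩
    exact ⟨rfl, rfl, rfl⟩

theorem magGeo_zero' (A B u v z : ℝ) : magGeo A B u v z 0 = (0, 0, 0) := by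
  unfold magGeo
  split_ifs <;> simp

/-- Necessary conditions for periodicity. -/
theorem period_nec (A B E u v z w : ℝ) (hA : 0 < A) (hE : 0 < E)
    (hen : E ^ 2 = (u ^ 2 + v ^ 2) / A + (z + B) ^ 2) (hw : 0 < w)
    (hp : magGeo A B u v z w = (0, 0, 0)) :
    z ≠ 0 ∧ Real.cos (z * w / A) = 1 ∧ z + B + (u ^ 2 + v ^ 2) / (2 * A * z) = 0 ∨
    z ≠ 0 ∧ u = 0 ∧ v = 0 ∧ z + B = 0 := by
  unfold magGeo at hp
  split_ifs at hp with hz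
  · simp only [Prod.mk.injEq] at hp
    obtain ⟨h1, h2, h3⟩ := hp
    have hsc := Real.sin_sq_add_cos_sq (z * w / A)
    set s := Real.sin (z * w / A)
    set c := Real.cos (z * w / A)
    have h1' : u * s - v * (1 - c) = 0 := by
      field_simp at h1; linarith
    have h2' : u * (1 - c) + v * s = 0 := by
      field_simp at h2; linarith
    have h4 : (u ^ 2 + v ^ 2) * (1 - c) = 0 := by
      have : (u ^ 2 + v ^ 2) * (s ^ 2 + (1 - c) ^ 2) = 0 := by
        linear_combination (u * s - v * (1 - c)) * h1' + (u * (1 - c) + v * s) * h2'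
      have h5 : s ^ 2 + (1 - c) ^ 2 = 2 * (1 - c) := by linear_combination hsc
      rw [h5] at this; linarith
    rcases mul_eq_zero.1 h4 with h | h
    · have hu : u = 0 := by nlinarith [sq_nonneg u, sq_nonneg v]
      have hv : v = 0 := by nlinarith [sq_nonneg u, sq_nonneg v]
      subst hu hv
      right
      refine ⟨hz, rfl, rfl, ?_⟩
      simp at h3
      rcases h3 with h3 | h3
      · exact h3
      · exact absurd h3 hw.ne'
    · left
      have hc : c = 1 := by linarith
      have hs : s = 0 := by
        rw [hc] at hsc
        have : s ^ 2 = 0 := by linarith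
        exact pow_eq_zero_iff (two_ne_zero) |>.1 this
      refine ⟨hz, hc, ?_⟩
      rw [hs] at h3
      have : (z + B + (u ^ 2 + v ^ 2) / (2 * A * z)) * w = 0 := by linarith
      exact (mul_eq_zero.1 this).resolve_right hw.ne'
  · exfalso
    have hz : z = 0 := by simpa using hz
    simp only [Prod.mk.injEq] at hp
    obtain ⟨h1, h2, h3⟩ := hp
    have hu : u = 0 := by
      have := (div_eq_zero_iff.1 h1).resolve_right hA.ne'
      exact (mul_eq_zero.1 this).resolve_right hw.ne'
    have hv : v = 0 := by
      have := (div_eq_zero_iff.1 h2).resolve_right hA.ne'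
      exact (mul_eq_zero.1 this).resolve_right hw.ne'
    have hB : B = 0 := (mul_eq_zero.1 h3).resolve_right hw.ne'
    subst hu hv hB hz
    simp at hen
    exact hE.ne' hen

theorem period_suf (A B u v z w : ℝ) (hz : z ≠ 0) (hc : Real.cos (z * w / A) = 1)
    (hk : z + B + (u ^ 2 + v ^ 2) / (2 * A * z) = 0) (t : ℝ) :
    magGeo A B u v z (t + w) = magGeo A B u v z t := by
  have hs : Real.sin (z * w / A) = 0 := by
    have hsc := Real.sin_sq_add_cos_sq (z * w / A)
    rw [hc] at hsc
    have : Real.sin (z * w / A) ^ 2 = 0 := by linarith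
    exact pow_eq_zero_iff (two_ne_zero) |>.1 this
  have e : z * (t + w) / A = z * t / A + z * w / A := by ring
  unfold magGeo
  rw [if_pos hz, if_pos hz, hk, e, Real.sin_add, Real.cos_add, hs, hc]
  simp

theorem least_cos (A z : ℝ) (hA : 0 < A) (hz : z ≠ 0) :
    IsLeast {w : ℝ | 0 < w ∧ Real.cos (z * w / A) = 1} (2 * π * A / |z|) := by
  have hz' : 0 < |z| := abs_pos.2 hz
  have key : ∀ w, Real.cos (z * w / A) = Real.cos (|z| * w / A) := by
    intro w
    rcases abs_choice z with h | h
    · rw [h]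
    · rw [h, ← Real.cos_neg]; congr 1; ring
  constructor
  · refine ⟨by positivity, ?_⟩
    rw [key]
    have : |z| * (2 * π * A / |z|) / A = 2 * π := by field_simp
    rw [this, Real.cos_two_pi]
  · rintro w ⟨hw, hc⟩
    rw [key] at hc
    obtain ⟨n, hn⟩ := (Real.cos_eq_one_iff _).1 hc
    have hpos : 0 < |z| * w / A := by positivity
    have hn0 : (0 : ℝ) < n := by
      rw [← hn] at hpos
      exact pos_of_mul_pos_left hpos (by positivity)
    have hn1 : (1 : ℝ) ≤ n := by
      have : (0 : ℤ) < n := by exact_mod_cast hn0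
      exact_mod_cast this
    have h2 : 2 * π ≤ |z| * w / A := by
      rw [← hn]; nlinarith [Real.pi_pos]
    rw [le_div_iff₀ hA] at h2
    rw [div_le_iff₀ hz']
    linarith

theorem period_set (A B u v z : ℝ) (a : H3) (hA : 0 < A) (hz : z ≠ 0)
    (hR : u ^ 2 + v ^ 2 ≠ 0) (E : ℝ) (hE : 0 < E)
    (hen : E ^ 2 = (u ^ 2 + v ^ 2) / A + (z + B) ^ 2)
    (hk : z + B + (u ^ 2 + v ^ 2) / (2 * A * z) = 0) :
    IsLeast {ω' : ℝ | 0 < ω' ∧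
      ∀ t, Hmul a (magGeo A B u v z (t + ω')) = Hmul a (magGeo A B u v z t)}
      (2 * π * A / |z|) := by
  convert least_cos A z hA hz using 1
  ext w
  simp only [Set.mem_ofPred_eq, Hmul_left_cancel']
  refine and_congr_right fun hw => ⟨fun h => ?_, fun h t => period_suf A B u v z w hz h hk t⟩
  have h0 := h 0
  rw [zero_add, magGeo_zero'] at h0
  rcases period_nec A B E u v z w hA hE hen hw h0 with h1 | ⟨_, hu, hv, _⟩
  · exact h1.2.1
  · exfalso; apply hR; rw [hu, hv]; norm_num

/-- Membership in `L(e;E)` forces `z₀² = B² - E²`. -/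
theorem mem_nec (A B E l : ℝ) (hA : 0 < A) (hE : 0 < E) (hl : l ∈ LsetId A B E) :
    ∃ z : ℝ, z ≠ 0 ∧ z ^ 2 = B ^ 2 - E ^ 2 ∧ l = E * (2 * π * A / |z|) := by
  obtain ⟨a, u, v, z, w, hen, -, hw, rfl⟩ := hl
  have hp := hw.1.2 0
  rw [Hmul_left_cancel', zero_add, magGeo_zero'] at hp
  rcases period_nec A B E u v z w hA hE hen hw.1.1 hp with ⟨hz, hc, hk⟩ | ⟨hz, hu, hv, hB⟩
  · have hR' : u ^ 2 + v ^ 2 = -(2 * A * z * (z + B)) := by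
      field_simp at hk; linarith
    have hz2 : z ^ 2 = B ^ 2 - E ^ 2 := by
      rw [hen, hR']; field_simp; ring
    have hR : u ^ 2 + v ^ 2 ≠ 0 := by
      intro h
      rw [h] at hk hen
      simp at hk
      rw [hk] at hen
      simp at hen
      exact hE.ne' hen
    exact ⟨z, hz, hz2, by rw [hw.unique (period_set A B u v z a hA hz hR E hE hen hk)]⟩
  · exfalso
    rw [hu, hv, hB] at hen
    simp at hen
    exact hE.ne' hen

/-- If `E ≥ |B|` then `L(e;E) = ∅`, while if `0 < E < |B|` then
`L(e;E) = {2πA/√(B²/E² - 1)}`. -/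
theorem stmt11 (A B E : ℝ) (hA : 0 < A) (hE : 0 < E) :
    (|B| ≤ E → LsetId A B E = ∅) ∧
    (E < |B| → LsetId A B E = {2 * π * A / Real.sqrt (B ^ 2 / E ^ 2 - 1)}) := by
  constructor
  · intro hB
    ext l
    simp only [Set.mem_empty_iff_false, iff_false]
    intro hl
    obtain ⟨z, hz, hz2, -⟩ := mem_nec A B E l hA hE hl
    have : 0 < z ^ 2 := by positivity
    have h2 : B ^ 2 ≤ E ^ 2 := sq_le_sq' (by linarith [neg_abs_le B]) (by linarith [le_abs_self B])
    linarith
  · intro hB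
    have hlen : ∀ z : ℝ, z ≠ 0 → z ^ 2 = B ^ 2 - E ^ 2 →
        E * (2 * π * A / |z|) = 2 * π * A / Real.sqrt (B ^ 2 / E ^ 2 - 1) := by
      intro z hz hz2
      have hz' : 0 < |z| := abs_pos.2 hz
      have h1 : B ^ 2 / E ^ 2 - 1 = (|z| / E) ^ 2 := by
        rw [div_pow, sq_abs, hz2]; field_simp
      rw [h1, Real.sqrt_sq (by positivity)]
      field_simp
    have hBE : E ^ 2 < B ^ 2 := by rw [← sq_abs B]; gcongr
    ext l
    rw [Set.mem_singleton_iff]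
    constructor
    · intro hl
      obtain ⟨z, hz, hz2, rfl⟩ := mem_nec A B E l hA hE hl
      exact hlen z hz hz2
    · rintro rfl
      have hB0 : B ≠ 0 := by rintro rfl; simp at hB; linarith
      obtain ⟨z, hz, hz2, hneg⟩ :
          ∃ z : ℝ, z ≠ 0 ∧ z ^ 2 = B ^ 2 - E ^ 2 ∧ z * (z + B) < 0 := by
        have hr : 0 < Real.sqrt (B ^ 2 - E ^ 2) := Real.sqrt_pos.2 (by linarith)
        have hr2 : Real.sqrt (B ^ 2 - E ^ 2) ^ 2 = B ^ 2 - E ^ 2 := Real.sq_sqrt (by linarith)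
        set r := Real.sqrt (B ^ 2 - E ^ 2)
        have hE2 : 0 < E ^ 2 := by positivity
        rcases lt_or_gt_of_ne hB0 with h | h
        · have : r < -B := by nlinarith
          exact ⟨r, hr.ne', hr2, by nlinarith⟩
        · have : r < B := by nlinarith
          exact ⟨-r, by linarith, by rw [neg_sq, hr2], by nlinarith⟩
      have hRpos : 0 < -(2 * A * (z * (z + B))) := by
        have := mul_pos_of_neg_of_neg hneg (by linarith : -(2 * A) < 0)
        linarith
      set v := Real.sqrt (-(2 * A * (z * (z + B)))) with hv
      have hv0 : 0 < v := Real.sqrt_pos.2 hRpos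
      have hv2 : v ^ 2 = -(2 * A * (z * (z + B))) := Real.sq_sqrt hRpos.le
      have hk : z + B + ((0:ℝ) ^ 2 + v ^ 2) / (2 * A * z) = 0 := by
        rw [hv2]; field_simp; ring
      have hen : E ^ 2 = ((0:ℝ) ^ 2 + v ^ 2) / A + (z + B) ^ 2 := by
        rw [hv2]; field_simp; linear_combination A * hz2
      have hR : (0:ℝ) ^ 2 + v ^ 2 ≠ 0 := by positivity
      refine ⟨(0, 0, 0), 0, v, z, 2 * π * A / |z|, hen, ⟨π * A / z, 0, ?_⟩,
        period_set A B 0 v z _ hA hz hR E hE hen hk, (hlen z hz hz2).symm⟩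
      rw [Ne, Hmul_left_cancel', magGeo_zero']
      intro h
      have h1 := congrArg Prod.fst h
      have e : z * (π * A / z) / A = π := by field_simp
      simp only [magGeo, if_pos hz, e, Real.cos_pi, Real.sin_pi] at h1
      have : v / z ≠ 0 := div_ne_zero hv0.ne' hz
      apply this
      linarith
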